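/- arXiv:2502.02332 — 4 statements merged into one kernel-verified Lean document; each statement's English description precedes it below -/
import Mathlib

section
/- Let E be a real inner product space, let J : E → ℝ be differentiable with gradient ∇J that is L-Lipschitz (L > 0), let θ, g ∈ E, let 0 < η ≤ 1/(4L), and set θ⁺ := θ + η·g. Then (η/4)·‖∇J(θ)‖² ≤ J(θ⁺) − J(θ) + (3η/4)·‖g − ∇J(θ)‖². -/
/-!
The lower quadratic bound for a function with `L`-Lipschitz gradient, applied at `θ` with
displacement `η • g`, gives `J θ⁺ - J θ ≥ η ⟪∇J θ, g⟫ - (L η² / 2) ‖g‖²`, and `η ≤ 1 / (4 L)` turns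
the last coefficient into at most `η / 8`. With `a = ∇J θ` and `d = g - a`, what remains is
`η (5/8 ‖a‖² + 3/4 ⟪a, d⟫ + 5/8 ‖d‖²) ≥ 0`, and the bracket is
`3/8 ‖a + d‖² + 1/4 ‖a‖² + 1/4 ‖d‖²`, where `a + d = g`.
-/

/-- The descent lemma, in its lower-bound form: comparison along the segment `t ↦ x + t • v`
of `J` with the quadratic whose derivative at `t` is `⟪∇J x, v⟫ - t L ‖v‖²`. -/
theorem lower_quadratic_bound_of_lipschitz_gradient
    {E : Type*} [NormedAddCommGroup E] [InnerProductSpace ℝ E] [CompleteSpace E]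
    {J : E → ℝ} {gJ : E → E} (hgrad : ∀ x, HasGradientAt J (gJ x) x)
    {L : ℝ} (hLip : ∀ x y, ‖gJ x - gJ y‖ ≤ L * ‖x - y‖) (x v : E) :
    J x + inner ℝ (gJ x) v - L / 2 * ‖v‖ ^ 2 ≤ J (x + v) := by
  have hB : ∀ t : ℝ, HasDerivAt (fun t : ℝ => J (x + t • v)) (inner ℝ (gJ (x + t • v)) v) t := by
    intro t
    have hline : HasDerivAt (fun t : ℝ => x + t • v) v t := by
      simpa using ((hasDerivAt_id t).smul_const v).const_add x
    have h := (hgrad (x + t • v)).hasFDerivAt.comp_hasDerivAt t hline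
    rw [InnerProductSpace.toDual_apply_apply] at h
    exact h
  have hf : ∀ t : ℝ, HasDerivAt
      (fun t : ℝ => J x + t * inner ℝ (gJ x) v - L / 2 * ‖v‖ ^ 2 * t ^ 2)
      (inner ℝ (gJ x) v - t * L * ‖v‖ ^ 2) t := by
    intro t
    have h := (((hasDerivAt_id t).mul_const (inner ℝ (gJ x) v)).const_add (J x)).sub
      (((hasDerivAt_id t).pow 2).const_mul (L / 2 * ‖v‖ ^ 2))
    refine h.congr_deriv ?_
    simp
    ring
  have key := image_le_of_deriv_right_le_deriv_boundary (a := 0) (b := 1)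
    (fun t _ => (hf t).continuousAt.continuousWithinAt)
    (fun t _ => (hf t).hasDerivWithinAt) (by simp)
    (fun t _ => (hB t).continuousAt.continuousWithinAt)
    (fun t _ => (hB t).hasDerivWithinAt)
    (fun t ht => by
      have hcs := real_inner_le_norm (gJ x - gJ (x + t • v)) v
      have hl := hLip x (x + t • v)
      rw [sub_add_cancel_left, norm_neg, norm_smul, Real.norm_of_nonneg ht.1] at hl
      rw [inner_sub_left] at hcs
      have hm := mul_le_mul_of_nonneg_right hl (norm_nonneg v)
      linarith) (Set.right_mem_Icc.2 zero_le_one)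
  simpa using key

/-- Per-iteration ascent inequality for a gradient-ascent step with an inexact
gradient `g`: for a differentiable `J` with `L`-Lipschitz gradient `gJ` and
step-size `0 < η ≤ 1/(4L)`, with `θ⁺ = θ + η • g`,
`(η/4)‖∇J(θ)‖² ≤ J(θ⁺) - J(θ) + (3η/4)‖g - ∇J(θ)‖²`. -/
theorem inexact_gradient_ascent_step
    {E : Type*} [NormedAddCommGroup E] [InnerProductSpace ℝ E] [CompleteSpace E]
    (J : E → ℝ) (gJ : E → E) (hgrad : ∀ x, HasGradientAt J (gJ x) x)
    (L : ℝ) (hL : 0 < L) (hLip : ∀ x y, ‖gJ x - gJ y‖ ≤ L * ‖x - y‖)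
    (θ g : E) (η : ℝ) (hη0 : 0 < η) (hη : η ≤ 1 / (4 * L)) :
    η / 4 * ‖gJ θ‖ ^ 2 ≤ J (θ + η • g) - J θ + 3 * η / 4 * ‖g - gJ θ‖ ^ 2 := by
  have hq := lower_quadratic_bound_of_lipschitz_gradient hgrad hLip θ (η • g)
  rw [inner_smul_right, norm_smul, Real.norm_of_nonneg hη0.le] at hq
  have hLη : L * η ≤ 1 / 4 := by
    rw [le_div_iff₀ (by positivity)] at hη
    linarith
  have hstep : L / 2 * (η * ‖g‖) ^ 2 ≤ η / 8 * ‖g‖ ^ 2 := by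
    have h := mul_le_mul_of_nonneg_right hLη (show 0 ≤ η / 2 * ‖g‖ ^ 2 by positivity)
    linarith
  have hd := norm_sub_sq_real g (gJ θ)
  rw [real_inner_comm] at hd
  have h1 : 0 ≤ η * (3 / 8 * ‖g‖ ^ 2 + 1 / 4 * ‖gJ θ‖ ^ 2 + 1 / 4 * ‖g - gJ θ‖ ^ 2) := by
    positivity
  have h2 : η * ‖g - gJ θ‖ ^ 2 = η * (‖g‖ ^ 2 - 2 * inner ℝ (gJ θ) g + ‖gJ θ‖ ^ 2) := by
    rw [hd]
  linarith
end

section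
/- Let E be a real inner product space, let J : E → ℝ be differentiable with L-Lipschitz gradient (L > 0), and suppose J(x) ≤ J* for all x ∈ E, for some J* ∈ ℝ. Let 0 < η ≤ 1/(4L), let N be a positive natural number, let g_0, …, g_{N−1} ∈ E, and define iterates θ_{n+1} := θ_n + η·g_n starting from θ_0. Then (1/N)·Σ_{n=0}^{N−1} ‖∇J(θ_n)‖² ≤ 4(J* − J(θ_0))/(η·N) + (3/N)·Σ_{n=0}^{N−1} ‖g_n − ∇J(θ_n)‖². -/
/-!
The Lipschitz gradient gives the quadratic lower bound
`J (x + v) ≥ J x + ⟪∇J x, v⟫ - (L / 2) ‖v‖²`. Take `v = η • g`, with `a = ∇J x` and error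
`e = g - a`. As `L η ≤ 1 / 4`, the gain of one step is at least `η (⟪a, g⟫ - ‖g‖² / 8)`, and
`⟪a, g⟫ - ‖g‖² / 8 - ‖a‖² / 4 + (3 / 4) ‖e‖² = (5/8) ‖a‖² + (3/4) ⟪a, e⟫ + (5/8) ‖e‖² ≥ 0`.
Hence every step gains at least `(η / 4) (‖a‖² - 3 ‖e‖²)`; the gains telescope, and their sum is
at most `J* - J (θ 0)`.
-/

/-- Quadratic lower bound for a function with `L`-Lipschitz gradient, obtained by comparing the
derivatives of both sides along the segment from `x` to `x + v`. -/
lemma quadratic_lower_bound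
    {E : Type*} [NormedAddCommGroup E] [InnerProductSpace ℝ E] [CompleteSpace E]
    (J : E → ℝ) (gJ : E → E) (hgrad : ∀ x, HasGradientAt J (gJ x) x)
    (L : ℝ) (hLip : ∀ x y, ‖gJ x - gJ y‖ ≤ L * ‖x - y‖) (x v : E) :
    J x + inner ℝ (gJ x) v - L / 2 * ‖v‖ ^ 2 ≤ J (x + v) := by
  have hB : ∀ t : ℝ, HasDerivAt (fun t : ℝ => J (x + t • v)) (inner ℝ (gJ (x + t • v)) v) t := by
    intro t
    have h1 : HasDerivAt (fun t : ℝ => x + t • v) v t := by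
      simpa using ((hasDerivAt_id t).smul_const v).const_add x
    exact ((hgrad (x + t • v)).hasFDerivAt.comp_hasDerivAt t h1).congr_deriv (by simp)
  have hf : ∀ t : ℝ, HasDerivAt
      (fun t : ℝ => J x + t * inner ℝ (gJ x) v - L / 2 * ‖v‖ ^ 2 * t ^ 2)
      (inner ℝ (gJ x) v - L * ‖v‖ ^ 2 * t) t := by
    intro t
    have h1 := (((hasDerivAt_id t).mul_const (inner ℝ (gJ x) v)).const_add (J x)).sub
      (((hasDerivAt_id t).pow 2).const_mul (L / 2 * ‖v‖ ^ 2))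
    refine h1.congr_deriv ?_
    simp
    ring
  have key := image_le_of_deriv_right_le_deriv_boundary (a := 0) (b := 1)
    (fun t _ => (hf t).continuousAt.continuousWithinAt)
    (fun t _ => (hf t).hasDerivWithinAt) (by simp)
    (fun t _ => (hB t).continuousAt.continuousWithinAt)
    (fun t _ => (hB t).hasDerivWithinAt) ?_ (Set.right_mem_Icc.2 zero_le_one)
  · simpa using key
  · rintro t ⟨ht, -⟩
    have h1 := real_inner_le_norm (gJ x - gJ (x + t • v)) v
    have h2 := hLip x (x + t • v)
    rw [sub_add_cancel_left, norm_neg, norm_smul, Real.norm_of_nonneg ht] at h2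
    have h3 := mul_le_mul_of_nonneg_right h2 (norm_nonneg v)
    rw [inner_sub_left] at h1
    linarith

/-- Gain of a single ascent step in direction `g`, in terms of the gradient and the error of `g`. -/
lemma ascent_step
    {E : Type*} [NormedAddCommGroup E] [InnerProductSpace ℝ E] [CompleteSpace E]
    (J : E → ℝ) (gJ : E → E) (hgrad : ∀ x, HasGradientAt J (gJ x) x)
    (L : ℝ) (hL : 0 < L) (hLip : ∀ x y, ‖gJ x - gJ y‖ ≤ L * ‖x - y‖)
    (η : ℝ) (hη0 : 0 < η) (hη : η ≤ 1 / (4 * L)) (x g : E) :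
    η / 4 * (‖gJ x‖ ^ 2 - 3 * ‖g - gJ x‖ ^ 2) ≤ J (x + η • g) - J x := by
  have h := quadratic_lower_bound J gJ hgrad L hLip x (η • g)
  obtain ⟨e, rfl⟩ : ∃ e, g = gJ x + e := ⟨g - gJ x, by abel⟩
  rw [norm_smul, Real.norm_of_nonneg hη0.le, inner_smul_right, inner_add_right,
    real_inner_self_eq_norm_sq, mul_pow, norm_add_sq_real] at h
  rw [add_sub_cancel_left]
  have hηL : η * L ≤ 1 / 4 := by
    rw [le_div_iff₀ (by positivity)] at hη
    linarith
  have hsq : 0 ≤ ‖gJ x‖ ^ 2 + 2 * inner ℝ (gJ x) e + ‖e‖ ^ 2 := by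
    rw [← norm_add_sq_real]
    positivity
  have h1 := mul_le_mul_of_nonneg_left (mul_le_mul_of_nonneg_right hηL hsq) hη0.le
  have h2 : 0 ≤ η * (5 / 8 * ‖gJ x‖ ^ 2 + 3 / 4 * inner ℝ (gJ x) e + 5 / 8 * ‖e‖ ^ 2) := by
    refine mul_nonneg hη0.le ?_
    nlinarith [sq_nonneg ‖gJ x‖, sq_nonneg ‖e‖]
  linarith

/-- Ergodic convergence of inexact gradient ascent on an upper-bounded smooth
objective: the average squared gradient norm over `N` iterations is bounded by
`4(J* - J(θ₀))/(ηN)` plus three times the average squared gradient-estimation error. -/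
theorem inexact_gradient_ascent_ergodic
    {E : Type*} [NormedAddCommGroup E] [InnerProductSpace ℝ E] [CompleteSpace E]
    (J : E → ℝ) (gJ : E → E) (hgrad : ∀ x, HasGradientAt J (gJ x) x)
    (L : ℝ) (hL : 0 < L) (hLip : ∀ x y, ‖gJ x - gJ y‖ ≤ L * ‖x - y‖)
    (Jstar : ℝ) (hbdd : ∀ x, J x ≤ Jstar)
    (η : ℝ) (hη0 : 0 < η) (hη : η ≤ 1 / (4 * L))
    (N : ℕ) (hN : 0 < N) (g : ℕ → E) (θ : ℕ → E)
    (hiter : ∀ n, θ (n + 1) = θ n + η • g n) :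
    (1 / (N : ℝ)) * ∑ n ∈ Finset.range N, ‖gJ (θ n)‖ ^ 2 ≤
      4 * (Jstar - J (θ 0)) / (η * N) +
        (3 / (N : ℝ)) * ∑ n ∈ Finset.range N, ‖g n - gJ (θ n)‖ ^ 2 := by
  have hstep : ∀ n, η / 4 * (‖gJ (θ n)‖ ^ 2 - 3 * ‖g n - gJ (θ n)‖ ^ 2) ≤
      J (θ (n + 1)) - J (θ n) := fun n => by
    rw [hiter]
    exact ascent_step J gJ hgrad L hL hLip η hη0 hη (θ n) (g n)
  have hsum := Finset.sum_le_sum fun n (_ : n ∈ Finset.range N) => hstep n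
  rw [Finset.sum_range_sub (fun n => J (θ n)), ← Finset.mul_sum, Finset.sum_sub_distrib,
    ← Finset.mul_sum] at hsum
  have hN' : (0 : ℝ) < N := Nat.cast_pos.2 hN
  have hb := hbdd (θ N)
  set A := ∑ n ∈ Finset.range N, ‖gJ (θ n)‖ ^ 2
  set B := ∑ n ∈ Finset.range N, ‖g n - gJ (θ n)‖ ^ 2
  have hR : 4 * (Jstar - J (θ 0)) / (η * N) + 3 / (N : ℝ) * B =
      (4 * (Jstar - J (θ 0)) + 3 * η * B) / (η * N) := by
    field_simp
  have hA : 1 / (N : ℝ) * A = η * A / (η * N) := by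
    field_simp
  rw [hR, hA]
  gcongr
  linarith
end

section
/- Let E be a real inner product space, let f : E → ℝ be differentiable with ψ-Lipschitz gradient (ψ > 0), and let f* ∈ ℝ and λ > 0 satisfy f(x) ≥ f* and ‖∇f(x)‖² ≥ λ·(f(x) − f*) for all x ∈ E. Let K, g ∈ E, let 0 < η ≤ 1/(4ψ), and set K⁺ := K − η·g. Then f(K⁺) − f* ≤ (1 − λη/4)·(f(K) − f*) + (3η/4)·‖g − ∇f(K)‖². -/
/-! The `ψ`-Lipschitz gradient gives the quadratic upper bound
`f (x + v) ≤ f x + ⟪∇f x, v⟫ + ψ / 2 * ‖v‖ ^ 2` (`descent_lemma`). Take `v = -η • g` with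
`g = ∇f K + e`. Since `ψ * η ≤ 1 / 4`, the quadratic term is at most
`η / 8 * ‖g‖ ^ 2 ≤ η / 4 * (‖∇f K‖ ^ 2 + ‖e‖ ^ 2)`, and the cross term `-η * ⟪∇f K, e⟫` is at most
`η / 2 * (‖∇f K‖ ^ 2 + ‖e‖ ^ 2)`. Altogether `f` decreases by at least
`η / 4 * ‖∇f K‖ ^ 2 - 3 * η / 4 * ‖e‖ ^ 2`, and gradient dominance at `K` converts `‖∇f K‖ ^ 2`
into the optimality gap. -/

/-- Quadratic upper bound for a function with Lipschitz gradient: along the segment from `x` to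
`x + v`, the derivative of `f` at time `t` is at most that of the quadratic. -/
theorem descent_lemma
    {E : Type*} [NormedAddCommGroup E] [InnerProductSpace ℝ E] [CompleteSpace E]
    {f : E → ℝ} {gf : E → E} (hgrad : ∀ x, HasGradientAt f (gf x) x)
    {ψ : ℝ} (hLip : ∀ x y, ‖gf x - gf y‖ ≤ ψ * ‖x - y‖) (x v : E) :
    f (x + v) ≤ f x + inner ℝ (gf x) v + ψ / 2 * ‖v‖ ^ 2 := by
  have hline (t : ℝ) : HasDerivAt (fun t : ℝ => x + t • v) v t := by
    simpa using ((hasDerivAt_id t).smul_const v).const_add x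
  have hd (t : ℝ) : HasDerivAt (fun t : ℝ => f (x + t • v)) (inner ℝ (gf (x + t • v)) v) t := by
    simpa [Function.comp_def] using
      (hgrad (x + t • v)).hasFDerivAt.comp_hasDerivAt t (hline t)
  have hB (t : ℝ) : HasDerivAt
      (fun t : ℝ => f x + t * inner ℝ (gf x) v + ψ / 2 * ‖v‖ ^ 2 * t ^ 2)
      (inner ℝ (gf x) v + ψ * ‖v‖ ^ 2 * t) t := by
    refine ((((hasDerivAt_id t).mul_const (inner ℝ (gf x) v)).const_add (f x)).add
      ((hasDerivAt_pow 2 t).const_mul (ψ / 2 * ‖v‖ ^ 2))).congr_deriv ?_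
    push_cast
    ring
  have key := image_le_of_deriv_right_le_deriv_boundary (a := 0) (b := 1)
    (fun t _ => (hd t).continuousAt.continuousWithinAt) (fun t _ => (hd t).hasDerivWithinAt)
    (by simp) (fun t _ => (hB t).continuousAt.continuousWithinAt)
    (fun t _ => (hB t).hasDerivWithinAt) (fun t ht => ?_)
    (Set.right_mem_Icc.2 (zero_le_one' ℝ))
  · simpa using key
  · have h := (real_inner_le_norm (gf (x + t • v) - gf x) v).trans
      (mul_le_mul_of_nonneg_right (hLip (x + t • v) x) (norm_nonneg v))
    rw [inner_sub_left, add_sub_cancel_left, norm_smul, Real.norm_of_nonneg ht.1] at h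
    linarith

/-- Per-step contraction of the optimality gap for inexact gradient descent on a
gradient-dominated (PL) objective: with `K⁺ = K - η • g` and `0 < η ≤ 1/(4ψ)`,
`f(K⁺) - f* ≤ (1 - λη/4)(f(K) - f*) + (3η/4)‖g - ∇f(K)‖²`. -/
theorem pl_inexact_descent_step
    {E : Type*} [NormedAddCommGroup E] [InnerProductSpace ℝ E] [CompleteSpace E]
    (f : E → ℝ) (gf : E → E) (hgrad : ∀ x, HasGradientAt f (gf x) x)
    (ψ : ℝ) (hψ : 0 < ψ) (hLip : ∀ x y, ‖gf x - gf y‖ ≤ ψ * ‖x - y‖)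
    (fstar : ℝ) (lam : ℝ) (hlam : 0 < lam)
    (hlb : ∀ x, fstar ≤ f x) (hPL : ∀ x, lam * (f x - fstar) ≤ ‖gf x‖ ^ 2)
    (K g : E) (η : ℝ) (hη0 : 0 < η) (hη : η ≤ 1 / (4 * ψ)) :
    f (K - η • g) - fstar ≤
      (1 - lam * η / 4) * (f K - fstar) + 3 * η / 4 * ‖g - gf K‖ ^ 2 := by
  have hdesc := descent_lemma hgrad hLip K (-(η • g))
  rw [← sub_eq_add_neg, inner_neg_right, norm_neg, inner_smul_right, norm_smul,
    Real.norm_of_nonneg hη0.le] at hdesc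
  have hψη : ψ * η ≤ 1 / 4 := by
    rw [le_div_iff₀ (by positivity)] at hη
    linarith
  obtain ⟨e, rfl⟩ : ∃ e, g = gf K + e := ⟨g - gf K, by abel⟩
  rw [add_sub_cancel_left]
  rw [inner_add_right, real_inner_self_eq_norm_sq] at hdesc
  have hadd := norm_add_sq_real (gf K) e
  have hsub := norm_sub_sq_real (gf K) e
  have hquad : ψ / 2 * (η * ‖gf K + e‖) ^ 2 ≤ η / 8 * ‖gf K + e‖ ^ 2 := by
    have := mul_le_mul_of_nonneg_right hψη (by positivity : 0 ≤ η / 2 * ‖gf K + e‖ ^ 2)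
    linarith
  -- Besides `hdesc`, `hquad` and gradient dominance, the slack in the claim is exactly
  -- `η / 2 * ‖gf K + e‖ ^ 2 + η / 8 * ‖gf K - e‖ ^ 2`.
  have h1 := mul_nonneg hη0.le (sq_nonneg ‖gf K + e‖)
  have h2 := mul_nonneg hη0.le (sq_nonneg ‖gf K - e‖)
  have h3 := mul_le_mul_of_nonneg_left (hPL K) hη0.le
  rw [hadd] at hquad h1
  rw [hsub] at h2
  linarith
end

section
/- Let E be a real normed vector space, ψ ≥ 0, φ ≥ 0, h ≥ 0, M a positive natural number, and let g_1, …, g_M : E → E satisfy: each g_i is ψ-Lipschitz, ‖g_i(K)‖ ≤ φ for all i and all K ∈ E, and ‖g_i(K) − g_j(K)‖ ≤ h for all i, j and all K ∈ E. Then for every η ≥ 0, every index j ∈ {1,…,M}, and every K ∈ E: ‖(1/M)·Σ_{i=1}^{M} g_i(K − η·g_i(K)) − g_j(K)‖ ≤ η·ψ·φ + h. -/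
/-! The difference is the average over `i` of `g i (K - η • g i K) - g j K`, so it suffices to
bound each term. By the triangle inequality through `g i K`, the adaptation step costs at most
`ψ * ‖η • g i K‖ ≤ η * ψ * φ` (Lipschitz and uniform bounds), and passing from task `i` to
task `j` at the common point `K` costs at most `h`. -/

/-- Task-heterogeneity propagation bound: if the task gradients `g i` are
`ψ`-Lipschitz, uniformly bounded by `φ`, and pairwise within `h` of each other,
then the averaged one-step-adapted MAML gradient differs from any single task
gradient by at most `ηψφ + h`. -/
theorem maml_heterogeneity_bound
    {E : Type*} [NormedAddCommGroup E] [NormedSpace ℝ E]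
    (ψ φ h : ℝ) (hψ : 0 ≤ ψ) (hφ : 0 ≤ φ) (hh : 0 ≤ h)
    (M : ℕ) (hM : 0 < M) (g : Fin M → E → E)
    (hLip : ∀ i, ∀ x y, ‖g i x - g i y‖ ≤ ψ * ‖x - y‖)
    (hbdd : ∀ i, ∀ K : E, ‖g i K‖ ≤ φ)
    (hhet : ∀ i j, ∀ K : E, ‖g i K - g j K‖ ≤ h) :
    ∀ (η : ℝ), 0 ≤ η → ∀ (j : Fin M) (K : E),
      ‖(1 / (M : ℝ)) • (∑ i, g i (K - η • g i K)) - g j K‖ ≤ η * ψ * φ + h := by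
  intro η hη j K
  have hM0 : (0 : ℝ) < M := Nat.cast_pos.mpr hM
  have hterm : ∀ i, ‖g i (K - η • g i K) - g j K‖ ≤ η * ψ * φ + h := by
    intro i
    have hadapt : ‖g i (K - η • g i K) - g i K‖ ≤ η * ψ * φ :=
      calc ‖g i (K - η • g i K) - g i K‖
          ≤ ψ * ‖(K - η • g i K) - K‖ := hLip i _ _
        _ = ψ * (η * ‖g i K‖) := by
            rw [sub_sub_cancel_left, norm_neg, norm_smul, Real.norm_of_nonneg hη]
        _ ≤ ψ * (η * φ) := by gcongr; exact hbdd i K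
        _ = η * ψ * φ := by ring
    exact (norm_sub_le_norm_sub_add_norm_sub _ (g i K) _).trans
      (add_le_add hadapt (hhet i j K))
  have hsplit : (1 / (M : ℝ)) • (∑ i, g i (K - η • g i K)) - g j K
      = (1 / (M : ℝ)) • ∑ i, (g i (K - η • g i K) - g j K) := by
    rw [Finset.sum_sub_distrib, smul_sub, Finset.sum_const, Finset.card_univ,
      Fintype.card_fin, ← Nat.cast_smul_eq_nsmul ℝ, smul_smul,
      one_div_mul_cancel hM0.ne', one_smul]
  have hsum : ‖∑ i, (g i (K - η • g i K) - g j K)‖ ≤ M * (η * ψ * φ + h) := by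
    simpa [mul_add] using norm_sum_le_of_le Finset.univ fun i _ => hterm i
  rw [hsplit, norm_smul, Real.norm_of_nonneg (by positivity), one_div]
  exact (inv_mul_le_iff₀ hM0).mpr hsum
end
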